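/- Let (μ,K) ∈ ℚ_{>0} × ℕ* with K ∈ μℕ*, λ ∈ ℂ*, and let g ∈ ℍ^{[λ]}_{μ,K}. Then the function ζ·g(ζ) also belongs to ℍ^{[λ]}_{μ,K}, and the q-Laplace transform satisfies L^{[λ]}_{μ,K}(ζ g)(z) = z · L^{[λ]}_{μ,K}(g)(q^{1/μ} z) for every z ∈ ℂ* near 0 with z, q^{1/μ}z ∉ −λq^{K^{−1}ℤ}. -/

import Mathlib

/-- The Jacobi theta function `Θ_q(z) = ∑_{ℓ ∈ ℤ} q^{-ℓ(ℓ+1)/2} z^ℓ`. -/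
noncomputable def theta (q z : ℂ) : ℂ := ∑' ℓ : ℤ, q ^ (-(ℓ * (ℓ + 1) / 2)) * z ^ ℓ

/-- The real theta function `Θ_Q(x) = ∑_{ℓ ∈ ℤ} Q^{-ℓ(ℓ+1)/2} x^ℓ` for real `Q, x`;
for `Q > 1` and `x > 0` it is a positive real number. -/
noncomputable def thetaR (Q x : ℝ) : ℝ := ∑' ℓ : ℤ, Q ^ (-(ℓ * (ℓ + 1) / 2)) * x ^ ℓ

/-- Rational powers `q^α := exp(α log q)` of a complex number, via the principal logarithm. -/
noncomputable def qpow (q : ℂ) (α : ℚ) : ℂ := Complex.exp ((α : ℂ) * Complex.log q)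

/-- Rational (real) powers `b^α` for a real base. -/
noncomputable def qpowR (b : ℝ) (α : ℚ) : ℝ := b ^ (α : ℝ)

/-- The `ε`-neighborhood of the discrete `q^{1/K}`-spiral `λ q^{K⁻¹ℤ}` in `ℂ*`:
`∪_{ℓ∈K⁻¹ℤ} {z ∈ ℂ* : |z - q^ℓ λ| < ε |q^ℓ λ|}`. -/
def spiralNhd (q lam : ℂ) (K : ℕ) (ε : ℝ) : Set ℂ :=
  {z : ℂ | z ≠ 0 ∧ ∃ j : ℤ,
    ‖z - qpow q ((j : ℚ) / K) * lam‖ < ε * ‖qpow q ((j : ℚ) / K) * lam‖}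

/-- Membership in the space `ℍ^{[λ]}_{μ,K}`: `f` is meromorphic on a punctured
neighborhood of `0` in `ℂ*` and can be continued analytically to a connected domain `Ω`
containing an `ε`-neighborhood of the spiral `λ q^{K⁻¹ℤ}`, with
`q^{1/μ}`-exponential growth of order 1 at infinity:
`|f(z)| < L·Θ_{|q|^{1/μ}}(M|z|)` on `Ω`. -/
def memH (q : ℂ) (μ : ℚ) (K : ℕ) (lam : ℂ) (f : ℂ → ℂ) : Prop :=
  (∃ r > 0, MeromorphicOn f {z : ℂ | z ≠ 0 ∧ ‖z‖ < r}) ∧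
  ∃ ε > 0, ∃ Ω : Set ℂ, IsOpen Ω ∧ IsConnected Ω ∧ spiralNhd q lam K ε ⊆ Ω ∧
    AnalyticOnNhd ℂ f Ω ∧
    ∃ L > 0, ∃ M > 0, ∀ z ∈ Ω, ‖f z‖ < L * thetaR (qpowR ‖q‖ (1 / μ)) (M * ‖z‖)

/-- The `q`-Laplace transform of order `μ` in the direction `λ`:
`L^{[λ]}_{μ,K}(f)(z) = (μ/K) ∑_{ℓ∈K⁻¹ℤ} f(q^ℓ λ) / Θ_{q^{1/μ}}(q^{1/μ+ℓ} λ / z)`. -/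
noncomputable def qLaplace (q : ℂ) (μ : ℚ) (K : ℕ) (lam : ℂ) (f : ℂ → ℂ) (z : ℂ) : ℂ :=
  ((μ : ℂ) / (K : ℂ)) * ∑' j : ℤ, f (qpow q ((j : ℚ) / K) * lam) /
    theta (qpow q (1 / μ)) (qpow q (1 / μ + (j : ℚ) / K) * lam / z)

theorem theta_aux {F : Type*} [NormedField F] (q x : F) (hq : q ≠ 0) (hx : x ≠ 0) :
    ∑' l : ℤ, q ^ (-(l * (l + 1) / 2)) * (q * x) ^ l
      = x * ∑' l : ℤ, q ^ (-(l * (l + 1) / 2)) * x ^ l := by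
  rw [← tsum_mul_left, ← (Equiv.addRight (1 : ℤ)).tsum_eq]
  refine tsum_congr fun l => ?_
  simp only [Equiv.coe_addRight]
  have h : -((l + 1) * (l + 1 + 1) / 2) = -(l * (l + 1) / 2) - (l + 1) := by
    have : (l + 1) * (l + 1 + 1) = l * (l + 1) + (l + 1) * 2 := by ring
    rw [this, Int.add_mul_ediv_right _ _ (by norm_num)]
    ring
  rw [h, mul_zpow, zpow_sub₀ hq, zpow_add_one₀ hx]
  have := zpow_ne_zero (l + 1) hq
  field_simp

theorem theta_mul (q x : ℂ) (hq : q ≠ 0) (hx : x ≠ 0) : theta q (q * x) = x * theta q x :=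
  theta_aux q x hq hx

theorem thetaR_mul (q x : ℝ) (hq : q ≠ 0) (hx : x ≠ 0) : thetaR q (q * x) = x * thetaR q x :=
  theta_aux q x hq hx

theorem thetaR_zero (q : ℝ) : thetaR q 0 = 1 := by
  unfold thetaR
  rw [tsum_eq_single 0]
  · simp
  · intro b hb
    rw [zero_zpow b hb, mul_zero]

theorem qpow_add (q : ℂ) (a b : ℚ) : qpow q (a + b) = qpow q a * qpow q b := by
  unfold qpow
  rw [← Complex.exp_add]
  push_cast
  rw [add_mul]

theorem qpow_ne_zero (q : ℂ) (a : ℚ) : qpow q a ≠ 0 := Complex.exp_ne_zero _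

/-- if `g ∈ ℍ^{[λ]}_{μ,K}` then `ζ·g(ζ) ∈ ℍ^{[λ]}_{μ,K}` and
`L^{[λ]}_{μ,K}(ζg)(z) = z · L^{[λ]}_{μ,K}(g)(q^{1/μ} z)` for `z ∈ ℂ*` near `0`
off the spirals. -/
theorem qLaplace_mul_zeta (q : ℂ) (hq : 1 < ‖q‖) (μ : ℚ) (hμ : 0 < μ) (K : ℕ) (hK : 0 < K)
    (hKμ : ∃ m : ℕ, 0 < m ∧ (K : ℚ) = μ * m) (lam : ℂ) (hlam : lam ≠ 0)
    (g : ℂ → ℂ) (hg : memH q μ K lam g) :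
    memH q μ K lam (fun ζ => ζ * g ζ) ∧
    ∃ r > 0, ∀ z : ℂ, z ≠ 0 → ‖z‖ < r →
      (∀ j : ℤ, z ≠ -(qpow q ((j : ℚ) / K) * lam)) →
      (∀ j : ℤ, qpow q (1 / μ) * z ≠ -(qpow q ((j : ℚ) / K) * lam)) →
      qLaplace q μ K lam (fun ζ => ζ * g ζ) z
        = z * qLaplace q μ K lam g (qpow q (1 / μ) * z) := by
  refine ⟨?_, 1, one_pos, ?_⟩
  · obtain ⟨⟨r, hr, hmer⟩, ε, hε, Ω, hO, hC, hS, hA, L, hL, M, hM, hb⟩ := hg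
    have hQ : 0 < qpowR ‖q‖ (1 / μ) := Real.rpow_pos_of_pos (by linarith) _
    refine ⟨⟨r, hr, fun z hz => (MeromorphicAt.id z).mul (hmer z hz)⟩, ε, hε, Ω, hO, hC, hS,
      fun z hz => analyticAt_id.mul (hA z hz), L / M, by positivity,
      qpowR ‖q‖ (1 / μ) * M, by positivity, ?_⟩
    intro z hz
    by_cases h0 : z = 0
    · subst h0
      simp only [zero_mul, norm_zero, mul_zero, thetaR_zero, mul_one]
      positivity
    · have hz0 : 0 < ‖z‖ := norm_pos_iff.mpr h0
      rw [mul_assoc, thetaR_mul _ _ hQ.ne' (by positivity), norm_mul]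
      calc ‖z‖ * ‖g z‖ < ‖z‖ * (L * thetaR (qpowR ‖q‖ (1 / μ)) (M * ‖z‖)) :=
            mul_lt_mul_of_pos_left (hb z hz) hz0
        _ = _ := by field_simp
  · intro z hz _ _ _
    unfold qLaplace
    rw [mul_left_comm z, ← tsum_mul_left (a := z)]
    congr 1
    refine tsum_congr fun j => ?_
    have h1 := qpow_ne_zero q (1 / μ)
    have h2 := qpow_ne_zero q ((j : ℚ) / K)
    rw [qpow_add]
    set Q := qpow q (1 / μ)
    set p := qpow q ((j : ℚ) / K)
    have e1 : Q * p * lam / z = Q * (p * lam / z) := by ring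
    have e2 : Q * p * lam / (Q * z) = p * lam / z := by field_simp
    rw [e2, e1, theta_mul _ _ h1 (by positivity)]
    by_cases ht : theta Q (p * lam / z) = 0
    · simp [ht]
    · field_simp
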